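/- Let V be a standard complex Gaussian vector in ℂ^d, i.e. V(j) = X(j) + i·Y(j) where all X(j), Y(j), j ∈ Fin d, are independent real Gaussian random variables with mean 0 and variance 1/2. Then for every k and all index families i, i' : Fin k → Fin d, E[ ∏_{ℓ=1}^{k} v(i_ℓ) · ∏_{ℓ=1}^{k} conj(v(i'_ℓ)) ] = ∑_{α ∈ S_k} ∏_{ℓ=1}^{k} δ(i_ℓ, i'_{α(ℓ)}), where S_k is the symmetric group on k elements. -/

import Mathlib

open MeasureTheory ProbabilityTheory

/-- The law of a standard complex Gaussian vector in `ℂ^d`: each coordinate consists of a real and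
an imaginary part, each real Gaussian of mean `0` and variance `1/2`, all jointly independent. -/
noncomputable def complexGaussianVec (d : ℕ) : Measure (Fin d → ℝ × ℝ) :=
  Measure.pi fun _ => (gaussianReal 0 (1 / 2)).prod (gaussianReal 0 (1 / 2))

/-- The `j`-th entry `v(j) = x(j) + i·y(j)` of the complex Gaussian vector. -/
noncomputable def cvecEntry {d : ℕ} (ω : Fin d → ℝ × ℝ) (j : Fin d) : ℂ :=
  ((ω j).1 : ℂ) + ((ω j).2 : ℂ) * Complex.I

/-!
Grouping equal indices, the integrand becomes a product over coordinates `j` of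
`z j ^ m j * conj (z j) ^ n j`, where `m j` and `n j` count the occurrences of `j` in the two index
families. By independence the expectation factors; rotation invariance of the law of `z j` kills
every factor with `m j ≠ n j`, and `E |z| ^ (2 * m) = m! * v ^ m` for variance `v`. On the other
side, a bijection matching the two index families is the same as a bijection between their fibers
over each `j`, so there are `∏ j, (m j)!` of them if `m = n` and none otherwise.
-/

open scoped ComplexConjugate NNReal Nat Real

section FiberCounting

variable {α β γ : Type*}

lemma prod_comp_eq_prod_pow_card_fiber {M : Type*} [CommMonoid M] [Fintype α] [Fintype γ]
    [DecidableEq γ] (f : α → γ) (w : γ → M) :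
    ∏ a, w (f a) = ∏ c, w c ^ Fintype.card {a // f a = c} := by
  simp_rw [← Fintype.prod_fiberwise' f w, Finset.prod_const, Finset.card_univ]

/-- Bijections `α ≃ β` compatible with maps `f : α → γ` and `g : β → γ`, as families of bijections
between the fibers of `f` and those of `g`. It serves to count the former. -/
def compatibleEquivEquivPiFiber (f : α → γ) (g : β → γ) :
    {e : α ≃ β // ∀ a, f a = g (e a)} ≃ ∀ c, {a // f a = c} ≃ {b // g b = c} where
  toFun e c := e.1.subtypeEquiv fun a => by rw [e.2 a]
  invFun E := ⟨Equiv.ofFiberEquiv E, fun a => (Equiv.ofFiberEquiv_map E a).symm⟩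
  left_inv _ := rfl
  right_inv E := by
    ext c ⟨a, rfl⟩
    rfl

variable [Fintype α] [Fintype β] [DecidableEq α] [DecidableEq β]

lemma card_equiv_eq_ite :
    Fintype.card (α ≃ β) = if Fintype.card α = Fintype.card β then (Fintype.card α)! else 0 := by
  split_ifs with h
  · exact Fintype.card_equiv (Fintype.equivOfCardEq h)
  · rw [Fintype.card_eq_zero_iff, isEmpty_iff]
    exact fun e => h (Fintype.card_congr e)

variable [Fintype γ] [DecidableEq γ]

lemma card_compatible_equiv (f : α → γ) (g : β → γ) :
    Fintype.card {e : α ≃ β // ∀ a, f a = g (e a)} =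
      ∏ c, if Fintype.card {a // f a = c} = Fintype.card {b // g b = c}
        then (Fintype.card {a // f a = c})! else 0 := by
  simp_rw [Fintype.card_congr (compatibleEquivEquivPiFiber f g), Fintype.card_pi, card_equiv_eq_ite]

lemma sum_equiv_prod_ite {R : Type*} [CommSemiring R] (f : α → γ) (g : β → γ) (w : γ → R) :
    ∑ e : α ≃ β, ∏ a, (if f a = g (e a) then w (f a) else 0) =
      ∏ c, if Fintype.card {a // f a = c} = Fintype.card {b // g b = c}
        then (Fintype.card {a // f a = c})! * w c ^ Fintype.card {a // f a = c} else 0 := by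
  calc
    _ = (Fintype.card {e : α ≃ β // ∀ a, f a = g (e a)} : R) * ∏ a, w (f a) := by
      simp [Finset.prod_ite_zero, ← Finset.sum_filter, Fintype.card_subtype]
    _ = _ := by
      rw [card_compatible_equiv, prod_comp_eq_prod_pow_card_fiber, Nat.cast_prod,
        ← Finset.prod_mul_distrib]
      simp

end FiberCounting

lemma integral_radial_mul_pow_mul_conj_pow_of_ne (ρ : ℝ → ℂ) {m n : ℕ} (hmn : m ≠ n) :
    ∫ z : ℂ, ρ ‖z‖ * (z ^ m * conj z ^ n) = 0 := by
  -- Rotation by an angle `t` multiplies the integral by `exp (i (m - n) t)`: take `t` giving `-1`.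
  set u : Circle := Circle.exp (π / (m - n)) with hu
  have hphase : (u : ℂ) ^ m * conj (u : ℂ) ^ n = -1 := by
    have hmn' : (m : ℂ) - n ≠ 0 := sub_ne_zero.mpr (mod_cast hmn)
    rw [hu, Circle.coe_exp, ← Complex.exp_conj, ← Complex.exp_nat_mul, ← Complex.exp_nat_mul,
      ← Complex.exp_add, ← Complex.exp_pi_mul_I]
    congr 1
    rw [map_mul, Complex.conj_ofReal, Complex.conj_I]
    push_cast
    field_simp
    ring
  have hrot (z : ℂ) : ρ ‖rotation u z‖ * (rotation u z ^ m * conj (rotation u z) ^ n) =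
      -(ρ ‖z‖ * (z ^ m * conj z ^ n)) := by
    rw [LinearIsometryEquiv.norm_map, rotation_apply, map_mul]
    linear_combination (ρ ‖z‖ * (z ^ m * conj z ^ n)) * hphase
  have hinv := ((rotation u).measurePreserving).integral_comp
    (rotation u).toHomeomorph.measurableEmbedding fun z => ρ ‖z‖ * (z ^ m * conj z ^ n)
  simp_rw [hrot, integral_neg] at hinv
  exact self_eq_neg.mp hinv.symm

lemma integral_norm_pow_mul_exp_neg_norm_sq_div {v : ℝ} (hv : 0 < v) (n : ℕ) :
    ∫ z : ℂ, ‖z‖ ^ (2 * n) * Real.exp (-‖z‖ ^ 2 / v) = π * n ! * v ^ (n + 1) := by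
  have hn : (-2 : ℝ) < (2 * n : ℕ) := by linarith [(2 * n).cast_nonneg (α := ℝ)]
  have hexp : ((2 * n : ℕ) + 2 : ℝ) / 2 = (n + 1 : ℕ) := by push_cast; ring
  have h := Complex.integral_rpow_mul_exp_neg_mul_rpow one_le_two hn (inv_pos.mpr hv)
  rw [neg_div, hexp, Real.rpow_neg (by positivity), Real.rpow_natCast, inv_pow, inv_inv,
    Nat.cast_succ, Real.Gamma_nat_eq_factorial] at h
  simp_rw [Real.rpow_natCast, Real.rpow_two] at h
  convert h using 1
  · simp_rw [neg_div, div_eq_inv_mul, neg_mul]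
  · ring

/-- The centred circularly-symmetric Gaussian law on `ℂ`, the law of each entry of a complex
Gaussian vector. The parameter `v` is the complex variance `E |z| ^ 2`, so the real and imaginary
parts have variance `v / 2` each; for `v = 0` this is the Dirac mass at `0`. -/
noncomputable def complexGaussian (v : ℝ≥0) : Measure ℂ :=
  ((gaussianReal 0 (v / 2)).prod (gaussianReal 0 (v / 2))).map Complex.measurableEquivRealProd.symm

instance isProbabilityMeasure_complexGaussian (v : ℝ≥0) :
    IsProbabilityMeasure (complexGaussian v) :=
  Measure.isProbabilityMeasure_map Complex.measurableEquivRealProd.symm.measurable.aemeasurable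

lemma complexGaussian_zero : complexGaussian 0 = Measure.dirac 0 := by
  rw [complexGaussian, zero_div, gaussianReal_zero_var, Measure.dirac_prod_dirac,
    Measure.map_dirac' Complex.measurableEquivRealProd.symm.measurable]
  rfl

lemma gaussianPDFReal_mul_gaussianPDFReal_half (v : ℝ≥0) (x y : ℝ) :
    gaussianPDFReal 0 (v / 2) x * gaussianPDFReal 0 (v / 2) y =
      (π * v)⁻¹ * Real.exp (-(x ^ 2 + y ^ 2) / v) := by
  have hv : (2 : ℝ) * (v / 2 : ℝ≥0) = v := by push_cast; ring
  rw [gaussianPDFReal, gaussianPDFReal, mul_mul_mul_comm, ← mul_inv,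
    Real.mul_self_sqrt (by positivity), ← Real.exp_add, mul_right_comm, hv, mul_comm (v : ℝ)]
  ring_nf

lemma integral_complexGaussian_eq_integral_smul {E : Type*} [NormedAddCommGroup E]
    [NormedSpace ℝ E] {v : ℝ≥0} (hv : v ≠ 0) (f : ℂ → E) :
    ∫ z, f z ∂complexGaussian v =
      ∫ z, ((π * v)⁻¹ * Real.exp (-‖z‖ ^ 2 / v)) • f z := by
  have hv' : v / 2 ≠ 0 := by positivity
  rw [complexGaussian, integral_map_equiv, gaussianReal_of_var_ne_zero _ hv',
    prod_withDensity (measurable_gaussianPDF _ _) (measurable_gaussianPDF _ _),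
    integral_withDensity_eq_integral_toReal_smul (by fun_prop)
      (.of_forall fun _ => ENNReal.mul_lt_top gaussianPDF_lt_top gaussianPDF_lt_top),
    ← Measure.volume_eq_prod,
    ← Complex.volume_preserving_equiv_real_prod.integral_comp'
      (f := Complex.measurableEquivRealProd)]
  refine integral_congr_ae (.of_forall fun z => ?_)
  simp only [ENNReal.toReal_mul, toReal_gaussianPDF, gaussianPDFReal_mul_gaussianPDFReal_half,
    Complex.measurableEquivRealProd_apply, Complex.sq_norm, Complex.normSq_apply, ← sq]
  rfl

theorem integral_pow_mul_conj_pow_complexGaussian (v : ℝ≥0) (m n : ℕ) :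
    ∫ z, z ^ m * conj z ^ n ∂complexGaussian v = if m = n then (m ! : ℂ) * v ^ m else 0 := by
  obtain rfl | hv := eq_or_ne v 0
  · rw [complexGaussian_zero, integral_dirac]
    rcases m with _ | m <;> rcases n with _ | n <;> simp
  rw [integral_complexGaussian_eq_integral_smul hv]
  split_ifs with hmn
  · subst hmn
    have hv' : (v : ℂ) ≠ 0 := mod_cast hv
    have hreal (z : ℂ) : ((π * v)⁻¹ * Real.exp (-‖z‖ ^ 2 / v)) • (z ^ m * conj z ^ m) =
        (((π * v)⁻¹ * (‖z‖ ^ (2 * m) * Real.exp (-‖z‖ ^ 2 / v)) : ℝ) : ℂ) := by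
      rw [← mul_pow, Complex.mul_conj', pow_mul, Complex.real_smul]
      push_cast
      ring
    simp_rw [hreal]
    rw [integral_complex_ofReal, integral_const_mul,
      integral_norm_pow_mul_exp_neg_norm_sq_div (by positivity)]
    push_cast
    field_simp
    ring
  · simp_rw [Complex.real_smul]
    exact integral_radial_mul_pow_mul_conj_pow_of_ne
      (fun r => (((π * v)⁻¹ * Real.exp (-r ^ 2 / v) : ℝ) : ℂ)) hmn

theorem complex_gaussian_vector_moment_general {ι κ κ' : Type*} [Fintype ι] [Fintype κ]
    [Fintype κ'] [DecidableEq ι] [DecidableEq κ] [DecidableEq κ'] (v : ι → ℝ≥0) (i : κ → ι)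
    (i' : κ' → ι) :
    ∫ z : ι → ℂ, (∏ ℓ, z (i ℓ)) * (∏ ℓ, conj (z (i' ℓ)))
        ∂(Measure.pi fun j => complexGaussian (v j)) =
      ∑ α : κ ≃ κ', ∏ ℓ, if i ℓ = i' (α ℓ) then (v (i ℓ) : ℂ) else 0 := by
  let m j := Fintype.card {ℓ // i ℓ = j}
  let n j := Fintype.card {ℓ // i' ℓ = j}
  calc
    _ = ∫ z : ι → ℂ, ∏ j, z j ^ m j * conj (z j) ^ n j
          ∂(Measure.pi fun j => complexGaussian (v j)) := by
      refine integral_congr_ae (.of_forall fun z => ?_)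
      simp only [prod_comp_eq_prod_pow_card_fiber i z,
        prod_comp_eq_prod_pow_card_fiber i' fun j => conj (z j), Finset.prod_mul_distrib, m, n]
    _ = ∏ j, ∫ z, z ^ m j * conj z ^ n j ∂complexGaussian (v j) :=
      integral_fintype_prod_eq_prod fun j z => z ^ m j * conj z ^ n j
    _ = ∏ j, if m j = n j then ((m j)! : ℂ) * v j ^ m j else 0 := by
      simp_rw [integral_pow_mul_conj_pow_complexGaussian]
    _ = _ := (sum_equiv_prod_ite i i' fun j => (v j : ℂ)).symm

lemma measurePreserving_cvecEntry (d : ℕ) :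
    MeasurePreserving cvecEntry (complexGaussianVec d) (Measure.pi fun _ => complexGaussian 1) := by
  have hentry : (cvecEntry : (Fin d → ℝ × ℝ) → Fin d → ℂ) =
      fun ω j => Complex.measurableEquivRealProd.symm (ω j) := by
    funext ω j
    simp [cvecEntry, Complex.mk_eq_add_mul_I]
  rw [hentry]
  exact measurePreserving_pi _ _ fun _ =>
    Complex.measurableEquivRealProd.symm.measurable.measurePreserving _

/-- Wick formula for a standard complex Gaussian vector:
`E[∏ v(iₗ) · ∏ conj(v(i'ₗ))] = ∑_{α ∈ S_k} ∏ δ(iₗ, i'_{α(ℓ)})`. -/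
theorem complex_gaussian_vector_moment {d k : ℕ} (i i' : Fin k → Fin d) :
    ∫ ω : Fin d → ℝ × ℝ,
        (∏ ℓ, cvecEntry ω (i ℓ)) * (∏ ℓ, (starRingEnd ℂ) (cvecEntry ω (i' ℓ)))
        ∂(complexGaussianVec d)
      = ∑ α : Equiv.Perm (Fin k), ∏ ℓ, if i ℓ = i' (α ℓ) then (1 : ℂ) else 0 := by
  have hmoment := complex_gaussian_vector_moment_general (fun _ => 1) i i'
  rw [← (measurePreserving_cvecEntry d).map_eq,
    integral_map (measurePreserving_cvecEntry d).aemeasurable (by fun_prop)] at hmoment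
  simpa only [NNReal.coe_one, Complex.ofReal_one] using hmoment
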